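/- arXiv:2601.22096 — 4 statements merged into one kernel-verified Lean document; each statement's English description precedes it below -/
import Mathlib

section
/- Assume the surplus and deficiency profiles are complementary, i.e. p⁺ t * p⁻ t = 0 for all t. Then for every feasible profile S of the single-storage reliability-dispatch problem, ∑_{t : Fin T} min 0 (S (t+1) − S t) = ∑_{t : p⁻ t > 0} (S (t+1) − S t). Consequently, minimizing the unserved energy ∑_{t : p⁻ t > 0} (p⁻ t − (S t − S (t+1))) over feasible profiles is equivalent to minimizing V(S). -/
/-- Feasibility for the single-storage reliability-dispatch problem. -/
def Feasible (T : ℕ) (pp pm : Fin T → ℝ) (S0 Sb xb : ℝ)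
    (S : Fin (T + 1) → ℝ) : Prop :=
  S 0 = S0 ∧ ∀ t : Fin T,
    (0 ≤ S t.succ ∧ S t.succ ≤ Sb) ∧
    |S t.succ - S t.castSucc| ≤ xb ∧
    (-(pm t) ≤ S t.succ - S t.castSucc ∧ S t.succ - S t.castSucc ≤ pp t)

/-- The objective `V(S) = ∑ₜ min 0 (S (t+1) − S t)`. -/
noncomputable def V (T : ℕ) (S : Fin (T + 1) → ℝ) : ℝ :=
  ∑ t : Fin T, min 0 (S t.succ - S t.castSucc)

/-! In a deficiency period complementarity forces the surplus to vanish, so storage cannot charge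
and `min 0` leaves the increment unchanged; in any other period there is no deficiency to serve, so
storage cannot discharge and `min 0` returns `0`. -/

section OrderedGroup

variable {ι G : Type*} [AddCommGroup G] [LinearOrder G] [IsOrderedAddMonoid G]

theorem min_zero_eq_ite_of_neg_le {d p : G} (hd : -p ≤ d) (hp : 0 < p → d ≤ 0) :
    min 0 d = if 0 < p then d else 0 := by
  split_ifs with h
  · exact min_eq_right (hp h)
  · exact min_eq_left ((neg_nonneg.mpr (not_lt.mp h)).trans hd)

theorem sum_min_zero_eq_sum_filter_pos (s : Finset ι) {d p : ι → G}
    (hd : ∀ i ∈ s, -p i ≤ d i) (hp : ∀ i ∈ s, 0 < p i → d i ≤ 0) :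
    ∑ i ∈ s, min 0 (d i) = ∑ i ∈ s with 0 < p i, d i := by
  rw [Finset.sum_filter]
  exact Finset.sum_congr rfl fun i hi => min_zero_eq_ite_of_neg_le (hd i hi) (hp i hi)

theorem objective_eq_deficiency_sum_general {T : ℕ} {pm : Fin T → G} {S : Fin (T + 1) → G}
    (hdischarge : ∀ t, -pm t ≤ S t.succ - S t.castSucc)
    (hcharge : ∀ t, 0 < pm t → S t.succ ≤ S t.castSucc) :
    ∑ t : Fin T, min 0 (S t.succ - S t.castSucc) =
      ∑ t : Fin T with 0 < pm t, (S t.succ - S t.castSucc) ∧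
    ∑ t : Fin T with 0 < pm t, (pm t - (S t.castSucc - S t.succ)) =
      ∑ t with 0 < pm t, pm t + ∑ t : Fin T, min 0 (S t.succ - S t.castSucc) := by
  have objective_eq : ∑ t : Fin T, min 0 (S t.succ - S t.castSucc) =
      ∑ t : Fin T with 0 < pm t, (S t.succ - S t.castSucc) :=
    sum_min_zero_eq_sum_filter_pos Finset.univ (fun t _ => hdischarge t)
      fun t _ ht => sub_nonpos.mpr (hcharge t ht)
  refine ⟨objective_eq, ?_⟩
  calc ∑ t : Fin T with 0 < pm t, (pm t - (S t.castSucc - S t.succ))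
      = ∑ t : Fin T with 0 < pm t, (pm t + (S t.succ - S t.castSucc)) := by
        simp only [sub_eq_add_neg (pm _), neg_sub]
    _ = ∑ t with 0 < pm t, pm t + ∑ t : Fin T with 0 < pm t, (S t.succ - S t.castSucc) :=
        Finset.sum_add_distrib
    _ = ∑ t with 0 < pm t, pm t + ∑ t : Fin T, min 0 (S t.succ - S t.castSucc) := by
        rw [objective_eq]

end OrderedGroup

namespace Feasible

variable {T : ℕ} {pp pm : Fin T → ℝ} {S0 Sb xb : ℝ} {S : Fin (T + 1) → ℝ}

theorem neg_le_succ_sub_castSucc (hS : Feasible T pp pm S0 Sb xb S) (t : Fin T) :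
    -pm t ≤ S t.succ - S t.castSucc :=
  (hS.2 t).2.2.1

theorem succ_sub_castSucc_le (hS : Feasible T pp pm S0 Sb xb S) (t : Fin T) :
    S t.succ - S t.castSucc ≤ pp t :=
  (hS.2 t).2.2.2

theorem succ_le_castSucc (hS : Feasible T pp pm S0 Sb xb S) {t : Fin T}
    (hcompl : pp t * pm t = 0) (ht : pm t ≠ 0) : S t.succ ≤ S t.castSucc := by
  have no_surplus : pp t = 0 := (mul_eq_zero.mp hcompl).resolve_right ht
  exact sub_nonpos.mp ((hS.succ_sub_castSucc_le t).trans_eq no_surplus)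

end Feasible

/-- Under complementarity `p⁺ t * p⁻ t = 0`, the objective equals the sum of
SoC increments over deficiency periods, and the unserved energy differs from
`V(S)` by the fixed constant `∑_{t : p⁻ t > 0} p⁻ t`. -/
theorem objective_eq_deficiency_sum (T : ℕ) (pp pm : Fin T → ℝ)
    (hpp : ∀ t, 0 ≤ pp t) (hpm : ∀ t, 0 ≤ pm t)
    (hcompl : ∀ t, pp t * pm t = 0)
    (S0 Sb xb : ℝ) (S : Fin (T + 1) → ℝ)
    (hS : Feasible T pp pm S0 Sb xb S) :
    (∑ t : Fin T, min 0 (S t.succ - S t.castSucc)) =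
      (∑ t ∈ Finset.univ.filter (fun t : Fin T => 0 < pm t),
        (S t.succ - S t.castSucc)) ∧
    (∑ t ∈ Finset.univ.filter (fun t : Fin T => 0 < pm t),
        (pm t - (S t.castSucc - S t.succ))) =
      (∑ t ∈ Finset.univ.filter (fun t : Fin T => 0 < pm t), pm t) + V T S :=
  objective_eq_deficiency_sum_general hS.neg_le_succ_sub_castSucc
    fun t ht => hS.succ_le_castSucc (hcompl t) ht.ne'
end

section
/- (Theorem 1, piecewise linearity in energy capacity.) Fix x̄ ≥ 0 and 0 ≤ S0, and define v(S̄) as the infimum of V(S) over feasible profiles. Then v is piecewise affine on [S0, ∞): there exist finitely many breakpoints S0 = a₀ < a₁ < ⋯ < aₙ and coefficients cᵢ, dᵢ such that v(S̄) = cᵢ·S̄ + dᵢ on each interval [aᵢ, aᵢ₊₁] for i < n and v(S̄) = cₙ·S̄ + dₙ on [aₙ, ∞). -/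
open Set Filter Topology

/-- `g` is piecewise affine on `[s, ∞)` with finitely many pieces: piece `i` is `c i * x + d i`, it
starts at the breakpoint `a i`, and the last piece is unbounded. Neighbouring pieces share their
breakpoint, so `g` is continuous on `[s, ∞)`. -/
def IsPiecewiseAffineOnIci (g : ℝ → ℝ) (s : ℝ) : Prop :=
  ∃ (n : ℕ) (a c d : Fin (n + 1) → ℝ), a 0 = s ∧ StrictMono a ∧
    (∀ i : Fin n, ∀ x ∈ Icc (a i.castSucc) (a i.succ), g x = c i.castSucc * x + d i.castSucc) ∧
    (∀ x ∈ Ici (a (Fin.last n)), g x = c (Fin.last n) * x + d (Fin.last n))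

section Selection

lemma exists_eqOn_of_isPreconnected_of_injOn {X Y κ : Type*} [TopologicalSpace X]
    [TopologicalSpace Y] [T2Space Y] {U : Set X} (hU : IsPreconnected U) (hne : U.Nonempty)
    {g : X → Y} (hg : ContinuousOn g U) {φ : κ → X → Y} {F : Set κ} (hF : F.Finite)
    (hφ : ∀ k ∈ F, ContinuousOn (φ k) U) (hsel : ∀ x ∈ U, ∃ k ∈ F, g x = φ k x)
    (hinj : ∀ x ∈ U, InjOn (fun k => φ k x) F) : ∃ k ∈ F, EqOn g (φ k) U := by
  obtain ⟨x₀, hx₀⟩ := hne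
  obtain ⟨k, hkF, hk⟩ := hsel x₀ hx₀
  refine ⟨k, hkF, fun y hy => ?_⟩
  have hlocal : ∀ x ∈ U, ∀ᶠ z in 𝓝[U] x, ∀ j ∈ F, g x = φ j x ↔ g z = φ j z := by
    intro x hx
    obtain ⟨i, hiF, hi⟩ := hsel x hx
    have hother : ∀ᶠ z in 𝓝[U] x, ∀ j ∈ F \ {i}, g z ≠ φ j z := by
      refine (hF.subset sdiff_subset).eventually_all.2 fun j hj => ?_
      have hne : g x ≠ φ j x := fun h => hj.2 (hinj x hx hj.1 hiF (h.symm.trans hi))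
      exact ((hg x hx).prodMk (hφ j hj.1 x hx)).eventually
        (isClosed_diagonal.isOpen_compl.eventually_mem hne)
    filter_upwards [hother, self_mem_nhdsWithin] with z hz hzU
    obtain ⟨j, hjF, hj⟩ := hsel z hzU
    obtain rfl : j = i := by_contra fun h => hz j ⟨hjF, h⟩ hj
    intro m hmF
    obtain rfl | hm := eq_or_ne m j
    · exact iff_of_true hi hj
    · exact iff_of_false (fun h => hm (hinj x hx hmF hiF (h.symm.trans hi))) (hz m ⟨hmF, hm⟩)
  exact (hU.induction₂ (fun x z => ∀ j ∈ F, g x = φ j x ↔ g z = φ j z) hlocal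
    (fun _ _ _ _ _ _ hxy hyz j hj => (hxy j hj).trans (hyz j hj))
    (fun _ _ _ _ hxy j hj => (hxy j hj).symm) hx₀ hy k hkF).1 hk

lemma finite_setOf_not_injOn_affine {R : Type*} [CommRing R] [IsDomain R] {F : Set (R × R)}
    (hF : F.Finite) : {x : R | ¬ InjOn (fun p : R × R => p.1 * x + p.2) F}.Finite := by
  have hcross : ∀ p q : R × R, p ≠ q → {x | p.1 * x + p.2 = q.1 * x + q.2}.Subsingleton := by
    intro p q hpq x (hx : p.1 * x + p.2 = q.1 * x + q.2) y (hy : p.1 * y + p.2 = q.1 * y + q.2)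
    by_contra hxy
    have hslope : p.1 = q.1 := by
      have h : (p.1 - q.1) * (x - y) = 0 := by linear_combination hx - hy
      exact sub_eq_zero.1 ((mul_eq_zero.1 h).resolve_right (sub_ne_zero.2 hxy))
    refine hpq (Prod.ext hslope ?_)
    linear_combination hx - x * hslope
  refine (hF.biUnion fun p _ => hF.biUnion fun q _ =>
    finite_iUnion fun h : p ≠ q => (hcross p q h).finite).subset fun x hx => ?_
  simp only [mem_ofPred_eq, InjOn, not_forall] at hx
  obtain ⟨p, hp, q, hq, heq, hne⟩ := hx
  simp only [mem_iUnion]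
  exact ⟨p, hp, q, hq, hne, heq⟩

lemma exists_strictMono_disjoint_Ioo {α : Type*} [LinearOrder α] {B : Set α} (hB : B.Finite)
    (s : α) :
    ∃ (n : ℕ) (a : Fin (n + 1) → α), a 0 = s ∧ StrictMono a ∧
      (∀ i : Fin n, Disjoint (Ioo (a i.castSucc) (a i.succ)) B) ∧
      Disjoint (Ioi (a (Fin.last n))) B := by
  have hfin : (insert s (B ∩ Ioi s)).Finite := (hB.inter_of_left _).insert s
  set C : Finset α := hfin.toFinset with hC
  have hmemC : ∀ {x}, x ∈ C ↔ x = s ∨ x ∈ B ∧ s < x := by simp [hC]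
  obtain ⟨n, hn⟩ : ∃ n, C.card = n + 1 :=
    Nat.exists_eq_succ_of_ne_zero (Finset.card_pos.2 ⟨s, hmemC.2 (.inl rfl)⟩).ne'
  set a : Fin (n + 1) ↪o α := C.orderEmbOfFin hn
  have hrange : ∀ x ∈ C, ∃ i, a i = x := fun x hx => by
    rwa [← Finset.mem_coe, ← C.range_orderEmbOfFin hn] at hx
  have hge : ∀ i, s ≤ a i := fun i => by
    obtain h | ⟨-, h⟩ := hmemC.1 (C.orderEmbOfFin_mem hn i)
    exacts [h.ge, h.le]
  have hhit : ∀ i, ∀ x ∈ B, a i < x → ∃ k, a k = x := fun i x hx h =>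
    hrange x (hmemC.2 (.inr ⟨hx, (hge i).trans_lt h⟩))
  refine ⟨n, a, ?_, a.strictMono, fun i => disjoint_left.2 ?_, disjoint_left.2 ?_⟩
  · obtain ⟨i, hi⟩ := hrange s (hmemC.2 (.inl rfl))
    exact le_antisymm (hi ▸ a.monotone (Fin.zero_le i)) (hge 0)
  · rintro x ⟨hix, hxi⟩ hxB
    obtain ⟨k, rfl⟩ := hhit _ x hxB hix
    exact (Fin.castSucc_lt_iff_succ_le.1 (a.lt_iff_lt.1 hix)).not_gt (a.lt_iff_lt.1 hxi)
  · intro x hx hxB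
    obtain ⟨k, rfl⟩ := hhit _ x hxB hx
    exact (Fin.le_last k).not_gt (a.lt_iff_lt.1 hx)

lemma isPiecewiseAffineOnIci_of_finite_selection {g : ℝ → ℝ} {s : ℝ} (hg : ContinuousOn g (Ici s))
    {F : Set (ℝ × ℝ)} (hF : F.Finite) (hsel : ∀ x ∈ Ioi s, ∃ p ∈ F, g x = p.1 * x + p.2) :
    IsPiecewiseAffineOnIci g s := by
  obtain ⟨n, a, ha0, hmono, hIoo, hIoi⟩ :=
    exists_strictMono_disjoint_Ioo (finite_setOf_not_injOn_affine hF) s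
  have hge : ∀ i, s ≤ a i := fun i => ha0 ▸ hmono.monotone (Fin.zero_le i)
  have hpiece : ∀ U : Set ℝ, IsPreconnected U → U.Nonempty → U ⊆ Ioi s →
      Disjoint U {x : ℝ | ¬ InjOn (fun p : ℝ × ℝ => p.1 * x + p.2) F} →
      ∃ p : ℝ × ℝ, ∀ x ∈ closure U, g x = p.1 * x + p.2 := by
    intro U hU hne hUs hcross
    obtain ⟨p, -, hp⟩ := exists_eqOn_of_isPreconnected_of_injOn
      (φ := fun (p : ℝ × ℝ) x => p.1 * x + p.2) hU hne
      (hg.mono (hUs.trans Ioi_subset_Ici_self)) hF (fun p _ => by fun_prop)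
      (fun x hx => hsel x (hUs hx)) (fun x hx => not_not.1 (disjoint_left.1 hcross hx))
    exact ⟨p, hp.of_subset_closure (hg.mono (closure_Ioi s ▸ closure_mono hUs)) (by fun_prop)
      subset_closure Subset.rfl⟩
  have hmid : ∀ i : Fin n, ∃ p : ℝ × ℝ, ∀ x ∈ Icc (a i.castSucc) (a i.succ),
      g x = p.1 * x + p.2 := by
    intro i
    have hlt : a i.castSucc < a i.succ := hmono i.castSucc_lt_succ
    rw [← closure_Ioo hlt.ne]
    exact hpiece _ isPreconnected_Ioo (nonempty_Ioo.2 hlt)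
      (Ioo_subset_Ioi_self.trans (Ioi_subset_Ioi (hge _))) (hIoo i)
  have hlast : ∃ p : ℝ × ℝ, ∀ x ∈ Ici (a (Fin.last n)), g x = p.1 * x + p.2 := by
    rw [← closure_Ioi]
    exact hpiece _ isPreconnected_Ioi nonempty_Ioi (Ioi_subset_Ioi (hge _)) hIoi
  choose p hp using hmid
  obtain ⟨q, hq⟩ := hlast
  exact ⟨n, a, Fin.snoc (fun i => (p i).1) q.1, Fin.snoc (fun i => (p i).2) q.2, ha0, hmono,
    by simpa only [Fin.snoc_castSucc] using hp, by simpa only [Fin.snoc_last] using hq⟩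

end Selection

section Vertices

variable {E ι : Type*} [AddCommGroup E] [Module ℝ E]

lemma eq_zero_of_active_eq_zero [Finite ι] {A : E →ₗ[ℝ] ι → ℝ} {d : ι → ℝ} {x w : E}
    (hx : x ∈ extremePoints ℝ {y | A y ≤ d}) (hw : ∀ i, A x i = d i → A w i = 0) : w = 0 := by
  have hsmall : ∀ᶠ ε in 𝓝[>] (0 : ℝ), ∀ i, |ε * A w i| ≤ d i - A x i := by
    refine eventually_all.2 fun i => ?_
    obtain hi | hi := (hx.1 i).eq_or_lt
    · exact .of_forall fun ε => by simp [hw i hi, hi]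
    · have hcont : Continuous fun ε : ℝ => |ε * A w i| := by fun_prop
      exact ((hcont.tendsto' 0 0 (by simp)).mono_left nhdsWithin_le_nhds).eventually_le_const
        (sub_pos.2 hi)
  obtain ⟨ε, hε, hε0⟩ := (hsmall.and self_mem_nhdsWithin).exists
  have hadd : A (x + ε • w) ≤ d := fun i => by
    simpa using le_sub_iff_add_le'.1 ((le_abs_self _).trans (hε i))
  have hsub : A (x - ε • w) ≤ d := fun i => by
    simpa [sub_eq_add_neg] using le_sub_iff_add_le'.1 ((neg_le_abs _).trans (hε i))
  have hmid : x ∈ openSegment ℝ (x + ε • w) (x - ε • w) :=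
    ⟨1 / 2, 1 / 2, by norm_num, by norm_num, by norm_num, by module⟩
  have hεw : ε • w = 0 := by simpa using hx.2 hadd hsub hmid
  exact (smul_eq_zero.1 hεw).resolve_left (ne_of_gt hε0)

lemma exists_finite_affine_extremePoints [Finite ι] (A : E →ₗ[ℝ] ι → ℝ) (b c : ι → ℝ) :
    ∃ F : Set (E × E), F.Finite ∧
      ∀ s : ℝ, ∀ x ∈ extremePoints ℝ {y | A y ≤ b + s • c}, ∃ p ∈ F, x = p.1 + s • p.2 := by
  let res : (I : Set ι) → (ι → ℝ) →ₗ[ℝ] (I → ℝ) := fun I => LinearMap.funLeft ℝ ℝ Subtype.val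
  -- `L I` recovers a vertex from its active set `I` and the right-hand sides of the rows in `I`.
  let L : (I : Set ι) → (I → ℝ) →ₗ[ℝ] E := fun I => (res I ∘ₗ A).leftInverse
  refine ⟨range fun I => (L I (res I b), L I (res I c)), finite_range _, fun s x hx => ?_⟩
  let I : Set ι := {i | A x i = (b + s • c) i}
  have hker : LinearMap.ker (res I ∘ₗ A) = ⊥ := LinearMap.ker_eq_bot'.2 fun w hw =>
    eq_zero_of_active_eq_zero hx fun i hi => congrFun hw ⟨i, hi⟩
  have hactive : res I (A x) = res I (b + s • c) := funext fun i => i.2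
  refine ⟨_, mem_range_self I, ?_⟩
  calc x = L I (res I (A x)) := (LinearMap.leftInverse_apply_of_inj hker x).symm
    _ = L I (res I b) + s • L I (res I c) := by rw [hactive, map_add, map_add, map_smul, map_smul]

end Vertices

section ParametricPolyhedron

variable {E ι κ : Type*} [AddCommGroup E] [Module ℝ E] [TopologicalSpace E]

lemma sInf_image_le_of_isCompact {X : Type*} [TopologicalSpace X] {K : Set X} (hK : IsCompact K)
    {f : X → ℝ} (hf : ContinuousOn f K) {x : X} (hx : x ∈ K) : sInf (f '' K) ≤ f x :=
  csInf_le (hK.image_of_continuousOn hf).bddBelow (mem_image_of_mem f hx)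

/-- The polyhedron `{x | A x ≤ b + s c}`, whose right-hand side moves affinely with the
parameter `s`. -/
def parametricPolyhedron (A : E →L[ℝ] ι → ℝ) (b c : ι → ℝ) (s : ℝ) : Set E :=
  {x | A x ≤ b + s • c}

variable {A : E →L[ℝ] ι → ℝ} {b c : ι → ℝ}

lemma isClosed_setOf_mem_parametricPolyhedron :
    IsClosed {q : ℝ × E | q.2 ∈ parametricPolyhedron A b c q.1} :=
  isClosed_le (f := fun q : ℝ × E => A q.2) (g := fun q => b + q.1 • c) (by fun_prop) (by fun_prop)

lemma convex_parametricPolyhedron (s : ℝ) : Convex ℝ (parametricPolyhedron A b c s) :=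
  (convex_Iic (b + s • c)).linear_preimage A.toLinearMap

lemma lineMap_mem_parametricPolyhedron {s₀ s₁ : ℝ} {x y : E}
    (hx : x ∈ parametricPolyhedron A b c s₀) (hy : y ∈ parametricPolyhedron A b c s₁) {t : ℝ}
    (ht : t ∈ Icc 0 1) :
    AffineMap.lineMap x y t ∈ parametricPolyhedron A b c (AffineMap.lineMap s₀ s₁ t) := by
  intro i
  have hxi : (1 - t) * A x i ≤ (1 - t) * (b i + s₀ * c i) :=
    mul_le_mul_of_nonneg_left (hx i) (sub_nonneg.2 ht.2)
  have hyi : t * A y i ≤ t * (b i + s₁ * c i) := mul_le_mul_of_nonneg_left (hy i) ht.1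
  simp only [AffineMap.lineMap_apply_module, map_add, map_smul, Pi.add_apply, Pi.smul_apply,
    smul_eq_mul]
  linarith

variable [IsTopologicalAddGroup E] [ContinuousSMul ℝ E] {f : E → ℝ}

lemma upperSemicontinuousWithinAt_sInf_image {s₀ s₁ : ℝ} (hf : Continuous f)
    (hcompact : ∀ s ∈ uIcc s₀ s₁, IsCompact (parametricPolyhedron A b c s))
    (hne₀ : (parametricPolyhedron A b c s₀).Nonempty)
    (hne₁ : (parametricPolyhedron A b c s₁).Nonempty) :
    UpperSemicontinuousWithinAt (fun s => sInf (f '' parametricPolyhedron A b c s))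
      (uIcc s₀ s₁) s₀ := by
  obtain ⟨x, hx, hxmin⟩ :=
    (hcompact s₀ left_mem_uIcc).exists_sInf_image_eq hne₀ hf.continuousOn
  obtain ⟨y, hy⟩ := hne₁
  -- For `s₁ = s₀` the division by zero makes `path` constantly `x`, as it should be.
  let path : ℝ → E := fun s => AffineMap.lineMap x y ((s - s₀) / (s₁ - s₀))
  have hpath : ∀ s ∈ uIcc s₀ s₁, path s ∈ parametricPolyhedron A b c s := by
    intro s hs
    rw [← segment_eq_uIcc, segment_eq_image_lineMap] at hs
    obtain ⟨t, ht, rfl⟩ := hs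
    obtain rfl | hne := eq_or_ne s₀ s₁
    · simpa [path] using hx
    · have hparam : (AffineMap.lineMap s₀ s₁ t - s₀) / (s₁ - s₀) = t := by
        rw [AffineMap.lineMap_apply_ring', add_sub_cancel_right,
          mul_div_cancel_right₀ _ (sub_ne_zero.2 hne.symm)]
      simpa only [path, hparam] using lineMap_mem_parametricPolyhedron hx hy ht
  have hfpath : Continuous (f ∘ path) := by
    simp only [path, AffineMap.lineMap_apply_module]
    fun_prop
  intro r hr
  have hr₀ : f (path s₀) < r := by simpa [path, ← hxmin] using hr
  filter_upwards [self_mem_nhdsWithin,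
    nhdsWithin_le_nhds (hfpath.continuousAt.eventually_lt_const hr₀)] with s hs hlt
  exact (sInf_image_le_of_isCompact (hcompact s hs) hf.continuousOn (hpath s hs)).trans_lt hlt

variable [T2Space E] [LocallyConvexSpace ℝ E]

/-- The Bauer minimum principle. -/
lemma exists_mem_extremePoints_sInf_image_eq {K : Set E} (hK : IsCompact K) (hne : K.Nonempty)
    (hf : ContinuousOn f K) (hconc : ConcaveOn ℝ K f) :
    ∃ x ∈ K.extremePoints ℝ, sInf (f '' K) = f x := by
  obtain ⟨y, hyK, hy⟩ := hK.exists_sInf_image_eq hne hf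
  have hface : IsExtreme ℝ K (K ∩ f ⁻¹' {f y}) := by
    refine ⟨inter_subset_left, ?_⟩
    rintro u hu v hv _ ⟨hwK, hw⟩ ⟨α, β, hα, hβ, hαβ, rfl⟩
    have hmin_u : f y ≤ f u := hy ▸ sInf_image_le_of_isCompact hK hf hu
    have hmin_v : f y ≤ f v := hy ▸ sInf_image_le_of_isCompact hK hf hv
    have hle : α * f u + β * f v ≤ f y := (hconc.2 hu hv hα.le hβ.le hαβ).trans_eq hw
    have hv_le : β * f y ≤ β * f v := mul_le_mul_of_nonneg_left hmin_v hβ.le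
    have hy_eq : α * f y + β * f y = f y := by rw [← add_mul, hαβ, one_mul]
    exact ⟨hu, (le_of_mul_le_mul_left (by linarith) hα).antisymm hmin_u⟩
  have hcompact : IsCompact (K ∩ f ⁻¹' {f y}) :=
    hK.of_isClosed_subset (hf.preimage_isClosed_of_isClosed hK.isClosed isClosed_singleton)
      inter_subset_left
  obtain ⟨x, hx⟩ := hcompact.extremePoints_nonempty ⟨y, hyK, rfl⟩
  exact ⟨x, hface.extremePoints_subset_extremePoints hx, hy.trans hx.1.2.symm⟩

variable [Finite ι]

lemma exists_finite_affine_minimizers (A : E →L[ℝ] ι → ℝ) (b c : ι → ℝ) (hf : Continuous f)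
    (hconc : ConcaveOn ℝ univ f) :
    ∃ F : Set (E × E), F.Finite ∧ ∀ s, IsCompact (parametricPolyhedron A b c s) →
      (parametricPolyhedron A b c s).Nonempty →
      ∃ p ∈ F, p.1 + s • p.2 ∈ parametricPolyhedron A b c s ∧
        sInf (f '' parametricPolyhedron A b c s) = f (p.1 + s • p.2) := by
  obtain ⟨F, hF, hvertex⟩ := exists_finite_affine_extremePoints A.toLinearMap b c
  refine ⟨F, hF, fun s hs hne => ?_⟩
  obtain ⟨x, hx, hmin⟩ := exists_mem_extremePoints_sInf_image_eq hs hne hf.continuousOn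
    (hconc.subset (subset_univ _) (convex_parametricPolyhedron s))
  obtain ⟨p, hpF, rfl⟩ := hvertex s x hx
  exact ⟨p, hpF, hx.1, hmin⟩

lemma lowerSemicontinuousOn_sInf_image {D : Set ℝ} (hf : Continuous f)
    (hconc : ConcaveOn ℝ univ f) (hcompact : ∀ s ∈ D, IsCompact (parametricPolyhedron A b c s))
    (hne : ∀ s ∈ D, (parametricPolyhedron A b c s).Nonempty) :
    LowerSemicontinuousOn (fun s => sInf (f '' parametricPolyhedron A b c s)) D := by
  obtain ⟨F, hF, hmin⟩ := exists_finite_affine_minimizers A b c hf hconc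
  intro s₀ hs₀ r hr
  have hpath : ∀ p ∈ F, ∀ᶠ s in 𝓝 s₀,
      p.1 + s • p.2 ∈ parametricPolyhedron A b c s → r < f (p.1 + s • p.2) := by
    intro p _
    by_cases hp : p.1 + s₀ • p.2 ∈ parametricPolyhedron A b c s₀
    · have hlt : r < f (p.1 + s₀ • p.2) :=
        hr.trans_le (sInf_image_le_of_isCompact (hcompact s₀ hs₀) hf.continuousOn hp)
      have hcont : Continuous fun s : ℝ => f (p.1 + s • p.2) := by fun_prop
      filter_upwards [hcont.continuousAt.eventually_const_lt hlt] with s hs _ using hs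
    · have hclosed : IsClosed {s : ℝ | p.1 + s • p.2 ∈ parametricPolyhedron A b c s} :=
        isClosed_setOf_mem_parametricPolyhedron.preimage
          (f := fun s : ℝ => (s, p.1 + s • p.2)) (by fun_prop)
      filter_upwards [hclosed.isOpen_compl.mem_nhds hp] with s hs hs' using absurd hs' hs
  filter_upwards [nhdsWithin_le_nhds (hF.eventually_all.2 hpath), self_mem_nhdsWithin]
    with s hs hsD
  obtain ⟨p, hpF, hp, hval⟩ := hmin s (hcompact s hsD) (hne s hsD)
  exact (hs p hpF hp).trans_eq hval.symm

lemma continuousOn_sInf_image_Ici {s : ℝ} (hf : Continuous f) (hconc : ConcaveOn ℝ univ f)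
    (hcompact : ∀ u ∈ Ici s, IsCompact (parametricPolyhedron A b c u))
    (hne : ∀ u ∈ Ici s, (parametricPolyhedron A b c u).Nonempty) :
    ContinuousOn (fun u => sInf (f '' parametricPolyhedron A b c u)) (Ici s) := by
  refine continuousOn_iff_lower_upperSemicontinuousOn.2
    ⟨lowerSemicontinuousOn_sInf_image hf hconc hcompact hne, fun u (hu : s ≤ u) r hr => ?_⟩
  have hnear : ∀ v ∈ Ici s, ∀ᶠ w in 𝓝[uIcc u v] u,
      sInf (f '' parametricPolyhedron A b c w) < r := fun v hv =>
    upperSemicontinuousWithinAt_sInf_image hf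
      (fun w hw => hcompact w (ordConnected_Ici.uIcc_subset hu hv hw)) (hne u hu) (hne v hv) r hr
  have hunion : 𝓝[Ici s] u ≤ 𝓝[uIcc u s ∪ uIcc u (u + 1)] u := by
    rw [uIcc_of_ge hu, uIcc_of_le (by linarith), Icc_union_Icc_eq_Icc hu (by linarith)]
    exact nhdsWithin_le_of_mem (inter_mem self_mem_nhdsWithin
      (mem_nhdsWithin_of_mem_nhds (Iic_mem_nhds (by linarith))))
  refine hunion ?_
  rw [nhdsWithin_union]
  exact mem_sup.2 ⟨hnear s self_mem_Ici, hnear (u + 1) (mem_Ici.2 (by linarith))⟩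

lemma isPiecewiseAffineOnIci_sInf_image [Finite κ] {s : ℝ} (hf : Continuous f)
    (hconc : ConcaveOn ℝ univ f) {l : κ → E →ₗ[ℝ] ℝ} (hl : ∀ x, ∃ k, f x = l k x)
    (hcompact : ∀ u ∈ Ici s, IsCompact (parametricPolyhedron A b c u))
    (hne : ∀ u ∈ Ici s, (parametricPolyhedron A b c u).Nonempty) :
    IsPiecewiseAffineOnIci (fun u => sInf (f '' parametricPolyhedron A b c u)) s := by
  obtain ⟨F, hF, hmin⟩ := exists_finite_affine_minimizers A b c hf hconc
  refine isPiecewiseAffineOnIci_of_finite_selection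
    (continuousOn_sInf_image_Ici hf hconc hcompact hne)
    (hF.image2 (fun p k => (l k p.2, l k p.1)) finite_univ) fun u hu => ?_
  have hu' : u ∈ Ici s := Ioi_subset_Ici_self hu
  obtain ⟨p, hpF, -, hval⟩ := hmin u (hcompact u hu') (hne u hu')
  obtain ⟨k, hk⟩ := hl (p.1 + u • p.2)
  refine ⟨_, mem_image2_of_mem hpF (mem_univ k), ?_⟩
  simp only [hval, hk, map_add, map_smul, smul_eq_mul]
  ring

end ParametricPolyhedron

section SumMinZero

variable {E τ : Type*} [AddCommGroup E] [Module ℝ E]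

lemma concaveOn_sum_min_zero (l : τ → E →ₗ[ℝ] ℝ) (σ : Finset τ) :
    ConcaveOn ℝ univ fun x => ∑ t ∈ σ, min 0 (l t x) := by
  induction σ using Finset.cons_induction with
  | empty => simpa using concaveOn_const (0 : ℝ) convex_univ
  | cons t σ ht ih =>
    simp only [Finset.sum_cons]
    exact ((concaveOn_const 0 convex_univ).inf ((l t).concaveOn convex_univ)).add ih

lemma exists_finset_sum_min_zero_eq [Fintype τ] (l : τ → E →ₗ[ℝ] ℝ) (x : E) :
    ∃ σ : Finset τ, ∑ t, min 0 (l t x) = (∑ t ∈ σ, l t) x := by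
  classical
  refine ⟨Finset.univ.filter fun t => l t x ≤ 0, ?_⟩
  rw [LinearMap.sum_apply, Finset.sum_filter]
  exact Finset.sum_congr rfl fun t _ => by rw [min_comm, min_def]

end SumMinZero

section Dispatch

variable {T : ℕ} {pp pm : Fin T → ℝ} {S0 xb Sb : ℝ} {S : Fin (T + 1) → ℝ}

/-- The increment `S (t+1) - S t` as a linear functional of the profile `S`. -/
def increment (t : Fin T) : (Fin (T + 1) → ℝ) →ₗ[ℝ] ℝ :=
  .proj (φ := fun _ => ℝ) t.succ - .proj (φ := fun _ => ℝ) t.castSucc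

lemma feasible_iff_increment_le :
    Feasible T pp pm S0 Sb xb S ↔ (S 0 ≤ S0 ∧ -S 0 ≤ -S0) ∧ ∀ t, -S t.succ ≤ 0 ∧ S t.succ ≤ Sb ∧
      increment t S ≤ min xb (pp t) ∧ -increment t S ≤ min xb (pm t) := by
  refine and_congr (by rw [neg_le_neg_iff, le_antisymm_iff]) (forall_congr' fun t => ?_)
  have hinc : increment t S = S t.succ - S t.castSucc := rfl
  rw [← hinc, abs_le, le_min_iff, le_min_iff, neg_le (b := xb), neg_le (b := pm t)]
  grind

lemma Feasible.mono {Sb' : ℝ} (h : Feasible T pp pm S0 Sb xb S) (hle : Sb ≤ Sb') :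
    Feasible T pp pm S0 Sb' xb S :=
  ⟨h.1, fun t => ⟨⟨(h.2 t).1.1, (h.2 t).1.2.trans hle⟩, (h.2 t).2⟩⟩

lemma feasible_const (hpp : ∀ t, 0 ≤ pp t) (hpm : ∀ t, 0 ≤ pm t) (hS0 : 0 ≤ S0) (hxb : 0 ≤ xb) :
    Feasible T pp pm S0 S0 xb fun _ => S0 :=
  ⟨rfl, fun t => by simp [hS0, hxb, hpp t, hpm t]⟩

lemma isBounded_setOf_feasible (T : ℕ) (pp pm : Fin T → ℝ) (S0 Sb xb : ℝ) :
    Bornology.IsBounded {S | Feasible T pp pm S0 Sb xb S} := by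
  refine (Metric.isBounded_Icc (Fin.cons S0 fun _ => 0 : Fin (T + 1) → ℝ)
    (Fin.cons S0 fun _ => Sb)).subset fun S hS => ⟨?_, ?_⟩
  · exact Fin.cases hS.1.ge fun t => (hS.2 t).1.1
  · exact Fin.cases hS.1.le fun t => (hS.2 t).1.2

lemma exists_parametricPolyhedron_eq_setOf_feasible (T : ℕ) (pp pm : Fin T → ℝ) (S0 xb : ℝ) :
    ∃ (A : (Fin (T + 1) → ℝ) →L[ℝ] Fin 2 ⊕ Fin T × Fin 4 → ℝ) (b c : Fin 2 ⊕ Fin T × Fin 4 → ℝ),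
      ∀ Sb, parametricPolyhedron A b c Sb = {S | Feasible T pp pm S0 Sb xb S} := by
  let coord : Fin (T + 1) → (Fin (T + 1) → ℝ) →ₗ[ℝ] ℝ := LinearMap.proj
  -- Two rows for `S 0 = S0`, then for each `t` the four rows of `feasible_iff_increment_le`.
  refine ⟨LinearMap.toContinuousLinearMap <| .pi <| Sum.elim ![coord 0, -coord 0] fun q =>
      ![-coord q.1.succ, coord q.1.succ, increment q.1, -increment q.1] q.2,
    Sum.elim ![S0, -S0] fun q => ![0, 0, min xb (pp q.1), min xb (pm q.1)] q.2,
    Sum.elim 0 fun q => ![0, 1, 0, 0] q.2, fun Sb => ?_⟩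
  ext S
  simp [parametricPolyhedron, feasible_iff_increment_le, Pi.le_def, Fin.forall_fin_succ, coord]

end Dispatch

theorem optimalValue_piecewise_affine_energy_general (T : ℕ) (pp pm : Fin T → ℝ) (S0 xb s : ℝ)
    (hfeas : ∃ S, Feasible T pp pm S0 s xb S) :
    IsPiecewiseAffineOnIci
      (fun Sb => sInf {r : ℝ | ∃ S, Feasible T pp pm S0 Sb xb S ∧ V T S = r}) s := by
  obtain ⟨A, b, c, hA⟩ := exists_parametricPolyhedron_eq_setOf_feasible T pp pm S0 xb
  have hcompact : ∀ Sb, IsCompact (parametricPolyhedron A b c Sb) := fun Sb =>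
    Metric.isCompact_of_isClosed_isBounded
      (isClosed_setOf_mem_parametricPolyhedron.preimage (Continuous.prodMk_right Sb))
      (hA Sb ▸ isBounded_setOf_feasible T pp pm S0 Sb xb)
  have hne : ∀ Sb ∈ Ici s, (parametricPolyhedron A b c Sb).Nonempty := fun Sb hSb =>
    hA Sb ▸ hfeas.imp fun S hS => hS.mono hSb
  have hcont : Continuous (V T) := by
    unfold V
    fun_prop
  have hpiecewise := isPiecewiseAffineOnIci_sInf_image hcont
    (concaveOn_sum_min_zero increment Finset.univ) (exists_finset_sum_min_zero_eq increment)
    (fun Sb _ => hcompact Sb) hne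
  simpa only [hA, image, mem_ofPred_eq] using hpiecewise

/-- Theorem 1 (piecewise linearity in energy capacity): the optimal value
`v(S̄)` is piecewise affine on `[S0, ∞)`. -/
theorem optimalValue_piecewise_affine_energy (T : ℕ) (pp pm : Fin T → ℝ)
    (hpp : ∀ t, 0 ≤ pp t) (hpm : ∀ t, 0 ≤ pm t)
    (S0 xb : ℝ) (hS0 : 0 ≤ S0) (hxb : 0 ≤ xb) :
    ∃ (n : ℕ) (a c d : Fin (n + 1) → ℝ),
      a 0 = S0 ∧ StrictMono a ∧
      (∀ i : Fin n, ∀ Sb ∈ Set.Icc (a i.castSucc) (a i.succ),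
        sInf {r : ℝ | ∃ S : Fin (T + 1) → ℝ,
            Feasible T pp pm S0 Sb xb S ∧ V T S = r} =
          c i.castSucc * Sb + d i.castSucc) ∧
      (∀ Sb ∈ Set.Ici (a (Fin.last n)),
        sInf {r : ℝ | ∃ S : Fin (T + 1) → ℝ,
            Feasible T pp pm S0 Sb xb S ∧ V T S = r} =
          c (Fin.last n) * Sb + d (Fin.last n)) :=
  optimalValue_piecewise_affine_energy_general T pp pm S0 xb S0
    ⟨_, feasible_const hpp hpm hS0 hxb⟩
end

section
/- (Full initial state of charge, Section V-B.) Fix x̄ ≥ 0 and replace the initial condition S 0 = S0 by S 0 = S̄ (the storage starts fully charged). Define v(S̄) as the infimum of V(S) over profiles satisfying S 0 = S̄, 0 ≤ S (t+1) ≤ S̄, |S (t+1) − S t| ≤ x̄, and −p⁻ t ≤ S (t+1) − S t ≤ p⁺ t for all t. Then v is antitone on [0, ∞); in particular the non-negativity of the storage MRI with respect to energy capacity remains valid when the initial SoC equals the full energy capacity. -/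
/-!
Translating a profile for capacity `A` upwards by `c ≥ 0` gives a profile for capacity `A + c` with
the same increments, hence with the same objective. So the set of attained objective values grows
with the capacity. It is bounded below, because no step contributes less than `min 0 (-p⁻ t)`, so
its infimum decreases wherever it is nonempty; never discharging the storage shows that it is.
-/

/-- Feasibility when the storage starts fully charged: `S 0 = S̄` and, for all
`t : Fin T`, `0 ≤ S (t+1) ≤ S̄`, `|S (t+1) − S t| ≤ x̄`, and
`−p⁻ t ≤ S (t+1) − S t ≤ p⁺ t`. -/
def FeasibleFull (T : ℕ) (pp pm : Fin T → ℝ) (Sb xb : ℝ)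
    (S : Fin (T + 1) → ℝ) : Prop :=
  S 0 = Sb ∧ ∀ t : Fin T,
    (0 ≤ S t.succ ∧ S t.succ ≤ Sb) ∧
    |S t.succ - S t.castSucc| ≤ xb ∧
    (-(pm t) ≤ S t.succ - S t.castSucc ∧ S t.succ - S t.castSucc ≤ pp t)

section

variable {T : ℕ} {pp pm : Fin T → ℝ} {Sb xb c : ℝ} {S : Fin (T + 1) → ℝ}

theorem V_add_const (S : Fin (T + 1) → ℝ) (c : ℝ) : V T (fun i => S i + c) = V T S := by
  simp only [V, add_sub_add_right_eq_sub]

namespace FeasibleFull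

theorem add_const (hS : FeasibleFull T pp pm Sb xb S) (hc : 0 ≤ c) :
    FeasibleFull T pp pm (Sb + c) xb (fun i => S i + c) := by
  obtain ⟨hinit, hstep⟩ := hS
  refine ⟨congrArg (· + c) hinit, fun t => ?_⟩
  obtain ⟨⟨hnonneg, hle⟩, hincrement⟩ := hstep t
  simp only [add_sub_add_right_eq_sub]
  exact ⟨⟨add_nonneg hnonneg hc, add_le_add_left hle c⟩, hincrement⟩

theorem sum_min_le_V (hS : FeasibleFull T pp pm Sb xb S) :
    ∑ t, min 0 (-(pm t)) ≤ V T S :=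
  Finset.sum_le_sum fun t _ => min_le_min_left 0 (hS.2 t).2.2.1

theorem const (hpp : ∀ t, 0 ≤ pp t) (hpm : ∀ t, 0 ≤ pm t) (hxb : 0 ≤ xb) (hSb : 0 ≤ Sb) :
    FeasibleFull T pp pm Sb xb (fun _ => Sb) :=
  ⟨rfl, fun t => by simp [hSb, hxb, hpp t, hpm t]⟩

end FeasibleFull

/-- The objective values attained by the feasible profiles that start fully charged. The capacity is
the last argument, so that `attainedValues pp pm xb` is a set-valued function of it; its infimum is
the optimal value `v(S̄)`. -/
def attainedValues (pp pm : Fin T → ℝ) (xb Sb : ℝ) : Set ℝ :=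
  {r | ∃ S : Fin (T + 1) → ℝ, FeasibleFull T pp pm Sb xb S ∧ V T S = r}

theorem monotone_attainedValues (pp pm : Fin T → ℝ) (xb : ℝ) :
    Monotone (attainedValues pp pm xb) := by
  rintro A B hAB _ ⟨S, hS, rfl⟩
  have hraised : FeasibleFull T pp pm B xb (fun i => S i + (B - A)) := by
    simpa only [add_sub_cancel] using hS.add_const (sub_nonneg.mpr hAB)
  exact ⟨_, hraised, V_add_const S (B - A)⟩

theorem bddBelow_attainedValues (pp pm : Fin T → ℝ) (xb Sb : ℝ) :
    BddBelow (attainedValues pp pm xb Sb) := by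
  refine ⟨∑ t, min 0 (-(pm t)), ?_⟩
  rintro _ ⟨S, hS, rfl⟩
  exact hS.sum_min_le_V

-- Where no profile is feasible, `sInf` takes the junk value `0`; the domain excludes this.
theorem optimalValue_antitone_energy_fullSoC_general (pp pm : Fin T → ℝ) (xb : ℝ) :
    AntitoneOn (fun Sb => sInf (attainedValues pp pm xb Sb))
      {Sb | ∃ S, FeasibleFull T pp pm Sb xb S} := by
  rintro A ⟨S, hS⟩ B _ hAB
  exact csInf_le_csInf (bddBelow_attainedValues pp pm xb B) ⟨V T S, S, hS, rfl⟩
    (monotone_attainedValues pp pm xb hAB)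

end

/-- Section V-B (full initial state of charge): with `S 0 = S̄`, the optimal
value `v(S̄)` is antitone on `[0, ∞)`; the non-negativity of the storage MRI
with respect to energy capacity remains valid. -/
theorem optimalValue_antitone_energy_fullSoC (T : ℕ) (pp pm : Fin T → ℝ)
    (hpp : ∀ t, 0 ≤ pp t) (hpm : ∀ t, 0 ≤ pm t)
    (xb : ℝ) (hxb : 0 ≤ xb) :
    AntitoneOn
      (fun Sb => sInf {r : ℝ | ∃ S : Fin (T + 1) → ℝ,
        FeasibleFull T pp pm Sb xb S ∧ V T S = r})
      (Set.Ici (0 : ℝ)) :=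
  (optimalValue_antitone_energy_fullSoC_general pp pm xb).mono fun _ hSb =>
    ⟨_, FeasibleFull.const hpp hpm hxb hSb⟩
end

section
/- (Multi-storage objective equivalence.) Assume the surplus and deficiency profiles are complementary, i.e. p⁺ t * p⁻ t = 0 for all t. Then for every feasible family S of the multi-storage reliability-dispatch problem, ∑_{t : Fin T} min 0 (∑_i (S i (t+1) − S i t)) = ∑_{t : p⁻ t > 0} ∑_i (S i (t+1) − S i t); hence minimizing the total unserved energy ∑_{t : p⁻ t > 0} (p⁻ t − ∑_i (S i t − S i (t+1))) over feasible families is equivalent to minimizing V(S). -/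
/-!
By complementarity, a period with `p⁻ t > 0` has `p⁺ t = 0`, so the upper aggregate constraint
makes the aggregate increment nonpositive and `min 0` leaves it unchanged. In every other period
the lower aggregate constraint makes the aggregate increment nonnegative, so `min 0` sends it to
`0`. Since the energy served by the storage is minus the aggregate increment, the unserved energy
is a constant plus the objective.
-/

/-- Feasibility for the multi-storage reliability-dispatch problem: for every
device `i`, `S i 0 = S0 i`, `0 ≤ S i (t+1) ≤ S̄ i`, `|S i (t+1) − S i t| ≤ x̄ i`,
`−p⁻ t ≤ S i (t+1) − S i t ≤ p⁺ t` (no cross-charging), together with the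
aggregate constraint `−p⁻ t ≤ ∑ᵢ (S i (t+1) − S i t) ≤ p⁺ t`. -/
def FeasibleM (T N : ℕ) (pp pm : Fin T → ℝ) (S0 Sb xb : Fin N → ℝ)
    (S : Fin N → Fin (T + 1) → ℝ) : Prop :=
  (∀ i, S i 0 = S0 i) ∧
  (∀ i, ∀ t : Fin T,
    (0 ≤ S i t.succ ∧ S i t.succ ≤ Sb i) ∧
    |S i t.succ - S i t.castSucc| ≤ xb i ∧
    (-(pm t) ≤ S i t.succ - S i t.castSucc ∧
      S i t.succ - S i t.castSucc ≤ pp t)) ∧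
  (∀ t : Fin T,
    -(pm t) ≤ ∑ i, (S i t.succ - S i t.castSucc) ∧
    ∑ i, (S i t.succ - S i t.castSucc) ≤ pp t)

/-- The objective `V(S) = ∑ₜ min 0 (∑ᵢ (S i (t+1) − S i t))`. -/
noncomputable def VM (T N : ℕ) (S : Fin N → Fin (T + 1) → ℝ) : ℝ :=
  ∑ t : Fin T, min 0 (∑ i, (S i t.succ - S i t.castSucc))

section ComplementaryBounds

variable {τ R : Type*}

theorem sum_min_zero_eq_sum_filter [AddCommMonoid R] [LinearOrder R] {s : Finset τ}
    {f : τ → R} (p : τ → Prop) [DecidablePred p]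
    (hnonpos : ∀ t ∈ s, p t → f t ≤ 0) (hnonneg : ∀ t ∈ s, ¬ p t → 0 ≤ f t) :
    ∑ t ∈ s, min 0 (f t) = ∑ t ∈ s with p t, f t := by
  rw [Finset.sum_filter]
  refine Finset.sum_congr rfl fun t ht => ?_
  split_ifs with hp
  · exact min_eq_right (hnonpos t ht hp)
  · exact min_eq_left (hnonneg t ht hp)

theorem nonpos_of_le_of_mul_eq_zero_of_pos [MulZeroClass R] [NoZeroDivisors R] [Preorder R]
    {x a b : R} (hx : x ≤ a) (hab : a * b = 0) (hb : 0 < b) : x ≤ 0 :=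
  hx.trans_eq ((mul_eq_zero.mp hab).resolve_right hb.ne')

theorem sum_min_zero_eq_sum_filter_pos_of_mul_eq_zero [Ring R] [LinearOrder R]
    [IsOrderedAddMonoid R] [NoZeroDivisors R] {s : Finset τ} {f pp pm : τ → R}
    (hcompl : ∀ t ∈ s, pp t * pm t = 0) (hf : ∀ t ∈ s, -pm t ≤ f t ∧ f t ≤ pp t) :
    ∑ t ∈ s, min 0 (f t) = ∑ t ∈ s with 0 < pm t, f t :=
  sum_min_zero_eq_sum_filter (fun t => 0 < pm t)
    (fun t ht hpos => nonpos_of_le_of_mul_eq_zero_of_pos (hf t ht).2 (hcompl t ht) hpos)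
    (fun t ht hnot => (neg_nonneg.mpr (not_lt.mp hnot)).trans (hf t ht).1)

end ComplementaryBounds

section AggregateIncrement

variable {T : ℕ} {ι R : Type*} [Fintype ι]

/-- The change of the total state of charge of all devices during period `t`, positive when the
storage charges. Period `t : Fin T` runs from time `t.castSucc` to time `t.succ`. -/
def aggregateIncrement [AddCommGroup R] (S : ι → Fin (T + 1) → R) (t : Fin T) : R :=
  ∑ i, (S i t.succ - S i t.castSucc)

theorem sum_castSucc_sub_succ_eq_neg_aggregateIncrement [AddCommGroup R]
    (S : ι → Fin (T + 1) → R) (t : Fin T) :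
    ∑ i, (S i t.castSucc - S i t.succ) = -aggregateIncrement S t := by
  simp only [aggregateIncrement, ← Finset.sum_neg_distrib, neg_sub]

theorem sum_unserved_eq_sum_add_sum_aggregateIncrement [AddCommGroup R]
    (s : Finset (Fin T)) (pm : Fin T → R) (S : ι → Fin (T + 1) → R) :
    ∑ t ∈ s, (pm t - ∑ i, (S i t.castSucc - S i t.succ)) =
      (∑ t ∈ s, pm t) + ∑ t ∈ s, aggregateIncrement S t := by
  simp only [sum_castSucc_sub_succ_eq_neg_aggregateIncrement, sub_neg_eq_add,
    Finset.sum_add_distrib]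

theorem objective_eq_deficiency_sum_multi_general [Ring R] [LinearOrder R]
    [IsOrderedAddMonoid R] [NoZeroDivisors R] {pp pm : Fin T → R} {S : ι → Fin (T + 1) → R}
    (hcompl : ∀ t, pp t * pm t = 0)
    (hS : ∀ t, -pm t ≤ aggregateIncrement S t ∧ aggregateIncrement S t ≤ pp t) :
    ∑ t, min 0 (aggregateIncrement S t) = ∑ t with 0 < pm t, aggregateIncrement S t ∧
    ∑ t with 0 < pm t, (pm t - ∑ i, (S i t.castSucc - S i t.succ)) =
      (∑ t with 0 < pm t, pm t) + ∑ t, min 0 (aggregateIncrement S t) := by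
  have hobjective : ∑ t, min 0 (aggregateIncrement S t) =
      ∑ t with 0 < pm t, aggregateIncrement S t :=
    sum_min_zero_eq_sum_filter_pos_of_mul_eq_zero (fun t _ => hcompl t) (fun t _ => hS t)
  refine ⟨hobjective, ?_⟩
  rw [hobjective, sum_unserved_eq_sum_add_sum_aggregateIncrement]

end AggregateIncrement

/-- Multi-storage objective equivalence under complementarity
`p⁺ t * p⁻ t = 0`: the objective equals the aggregate SoC increments over
deficiency periods, and the total unserved energy differs from `V(S)` by the
fixed constant `∑_{t : p⁻ t > 0} p⁻ t`. -/
theorem objective_eq_deficiency_sum_multi (T N : ℕ) (pp pm : Fin T → ℝ)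
    (hpp : ∀ t, 0 ≤ pp t) (hpm : ∀ t, 0 ≤ pm t)
    (hcompl : ∀ t, pp t * pm t = 0)
    (S0 Sb xb : Fin N → ℝ) (S : Fin N → Fin (T + 1) → ℝ)
    (hS : FeasibleM T N pp pm S0 Sb xb S) :
    (∑ t : Fin T, min 0 (∑ i, (S i t.succ - S i t.castSucc))) =
      (∑ t ∈ Finset.univ.filter (fun t : Fin T => 0 < pm t),
        ∑ i, (S i t.succ - S i t.castSucc)) ∧
    (∑ t ∈ Finset.univ.filter (fun t : Fin T => 0 < pm t),
        (pm t - ∑ i, (S i t.castSucc - S i t.succ))) =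
      (∑ t ∈ Finset.univ.filter (fun t : Fin T => 0 < pm t), pm t) +
        VM T N S :=
  objective_eq_deficiency_sum_multi_general hcompl hS.2.2
end
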